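/- Let f_1 and f_2 be self-usage utility functions with f_1'(x) > f_2'(x) for all x ∈ [0,1), and let 0 ≤ p_a < p_b < min(f_1'(0), f_2'(0)). For i = 1, 2 let s_{ia}, s_{ib} ∈ [0,1) satisfy f_i'(1−s_{ia}) = p_a and f_i'(1−s_{ib}) = p_b. Then the minimum sign-up bonus required to attract owner 2 strictly exceeds that required to attract owner 1: (p_b − p_a)·s_{2b} − (f_2(1−s_{2a}) − f_2(1−s_{2b}) − p_a·(s_{2b} − s_{2a})) > (p_b − p_a)·s_{1b} − (f_1(1−s_{1a}) − f_1(1−s_{1b}) − p_a·(s_{1b} − s_{1a})). Consequently, any sign-up bonus on platform a high enough to attract owner 2 away from platform b also attracts owner 1. -/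

import Mathlib

/-!
Let `U1` and `U2` be the utilities `p * s + f (1 - s)` of the two owners as functions of the price
`p` and the share `s`. Owner 1 loses `U1 pb s1b - U1 pa s1a` by switching, and similarly for
owner 2, so the claim is `U1 pb s1b + U2 pa s2a < U1 pa s1a + U2 pb s2b`. If `s1b < s2a`, exchanging
the two prices raises the left side, since `pa < pb`. If `s2a < s1b`, letting each owner take over
both the price and the share of the other raises it, since `f1 - f2` is increasing. Either way both
owners now face the prices on the right, where `s1a` and `s2b` are optimal. If `s1b = s2a`, the
exchange is neutral and strictness comes from `s1b` not being optimal for owner 1 at `pa`.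
-/

/-- A self-usage utility function `f` with derivative `f'`:
differentiable on `[0,1]`, strictly increasing on `[0,1]`,
strictly concave on `[0,1]` (with `f'` strictly decreasing), and `f' 1 = 0`. -/
def SelfUsage (f f' : ℝ → ℝ) : Prop :=
  (∀ x ∈ Set.Icc (0:ℝ) 1, HasDerivWithinAt f (f' x) (Set.Icc (0:ℝ) 1) x) ∧
  StrictMonoOn f (Set.Icc (0:ℝ) 1) ∧
  StrictConcaveOn ℝ (Set.Icc (0:ℝ) 1) f ∧
  StrictAntiOn f' (Set.Icc (0:ℝ) 1) ∧
  f' 1 = 0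

section Tangent

variable {D : Set ℝ} {f : ℝ → ℝ} {p x y : ℝ}

theorem le_tangent_of_concaveOn (hf : ConcaveOn ℝ D f) (hx : x ∈ D) (hy : y ∈ D)
    (hp : HasDerivWithinAt f p D x) : f y ≤ f x + p * (y - x) := by
  rcases lt_trichotomy x y with hxy | rfl | hyx
  · have hslope := hf.slope_le_of_hasDerivWithinAt hx hy hxy hp
    rw [slope_def_field, div_le_iff₀ (sub_pos.2 hxy)] at hslope
    linarith
  · simp
  · have hslope := hf.le_slope_of_hasDerivWithinAt hy hx hyx hp
    rw [slope_def_field, le_div_iff₀ (sub_pos.2 hyx)] at hslope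
    linarith

theorem lt_tangent_of_strictConcaveOn (hf : StrictConcaveOn ℝ D f) (hx : x ∈ D) (hy : y ∈ D)
    (hyx : y ≠ x) (hp : HasDerivWithinAt f p D x) : f y < f x + p * (y - x) := by
  rcases hyx.lt_or_gt with hyx | hxy
  · have hslope := hf.lt_slope_of_hasDerivWithinAt hy hx hyx hp
    rw [slope_def_field, lt_div_iff₀ (sub_pos.2 hyx)] at hslope
    linarith
  · have hslope := hf.slope_lt_of_hasDerivWithinAt hx hy hxy hp
    rw [slope_def_field, div_lt_iff₀ (sub_pos.2 hxy)] at hslope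
    linarith

end Tangent

theorem strictMonoOn_sub_of_hasDerivWithinAt_lt {D : Set ℝ} (hD : Convex ℝ D)
    {f f' g g' : ℝ → ℝ} (hf : ∀ x ∈ D, HasDerivWithinAt f (f' x) D x)
    (hg : ∀ x ∈ D, HasDerivWithinAt g (g' x) D x) (hlt : ∀ x ∈ interior D, g' x < f' x) :
    StrictMonoOn (f - g) D :=
  have hsub : ∀ x ∈ D, HasDerivWithinAt (f - g) (f' x - g' x) D x :=
    fun x hx ↦ (hf x hx).sub (hg x hx)
  strictMonoOn_of_hasDerivWithinAt_pos hD (fun x hx ↦ (hsub x hx).continuousWithinAt)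
    (fun x hx ↦ (hsub x (interior_subset hx)).mono interior_subset)
    (fun x hx ↦ sub_pos.2 (hlt x hx))

/-- The total utility of an owner with self-usage utility `f` who shares the fraction `s` of the
good at price `p` and keeps `1 - s`. Sets of admissible choices are given throughout as sets `D` of
kept fractions, the arguments of `f`. -/
def ownerUtility (f : ℝ → ℝ) (p s : ℝ) : ℝ := p * s + f (1 - s)

theorem switchingLoss_eq_ownerUtility_sub (f : ℝ → ℝ) (pa pb sa sb : ℝ) :
    (pb - pa) * sb - (f (1 - sa) - f (1 - sb) - pa * (sb - sa)) =
      ownerUtility f pb sb - ownerUtility f pa sa := by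
  unfold ownerUtility
  ring

section Optimality

variable {D : Set ℝ} {f : ℝ → ℝ} {p s t : ℝ}

theorem ownerUtility_le_of_hasDerivWithinAt (hf : ConcaveOn ℝ D f) (hs : 1 - s ∈ D)
    (ht : 1 - t ∈ D) (hp : HasDerivWithinAt f p D (1 - s)) :
    ownerUtility f p t ≤ ownerUtility f p s := by
  have htangent := le_tangent_of_concaveOn hf hs ht hp
  unfold ownerUtility
  linarith

theorem ownerUtility_lt_of_hasDerivWithinAt (hf : StrictConcaveOn ℝ D f) (hs : 1 - s ∈ D)
    (ht : 1 - t ∈ D) (hts : t ≠ s) (hp : HasDerivWithinAt f p D (1 - s)) :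
    ownerUtility f p t < ownerUtility f p s := by
  have htangent := lt_tangent_of_strictConcaveOn hf hs ht (sub_right_injective.ne hts) hp
  unfold ownerUtility
  linarith

end Optimality

section Exchange

variable {f1 f2 : ℝ → ℝ} {pa pb s t : ℝ}

theorem ownerUtility_add_lt_exchange_prices (hab : pa < pb) (hst : s < t) :
    ownerUtility f1 pb s + ownerUtility f2 pa t < ownerUtility f1 pa s + ownerUtility f2 pb t := by
  have hrevenue : pb * s + pa * t < pa * s + pb * t := by
    linarith [mul_lt_mul_of_pos_left hst (sub_pos.2 hab)]
  unfold ownerUtility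
  linarith

theorem ownerUtility_add_lt_exchange_owners {D : Set ℝ} (hmono : StrictMonoOn (f1 - f2) D)
    (hs : 1 - s ∈ D) (ht : 1 - t ∈ D) (hts : t < s) :
    ownerUtility f1 pb s + ownerUtility f2 pa t < ownerUtility f1 pa t + ownerUtility f2 pb s := by
  have hgain : f1 (1 - s) - f2 (1 - s) < f1 (1 - t) - f2 (1 - t) :=
    hmono hs ht (sub_lt_sub_left hts 1)
  unfold ownerUtility
  linarith

end Exchange

theorem signup_bonus_owner2_harder_general {D : Set ℝ} {f1 f2 : ℝ → ℝ}
    (hf1 : StrictConcaveOn ℝ D f1) (hf2 : ConcaveOn ℝ D f2) (hmono : StrictMonoOn (f1 - f2) D)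
    {pa pb : ℝ} (hab : pa < pb) {s1a s1b s2a s2b : ℝ}
    (h1a : 1 - s1a ∈ D) (h1b : 1 - s1b ∈ D) (h2a : 1 - s2a ∈ D) (h2b : 1 - s2b ∈ D)
    (hne : s1b ≠ s1a) (hd1a : HasDerivWithinAt f1 pa D (1 - s1a))
    (hd2b : HasDerivWithinAt f2 pb D (1 - s2b)) :
    (pb - pa) * s1b - (f1 (1 - s1a) - f1 (1 - s1b) - pa * (s1b - s1a))
      < (pb - pa) * s2b - (f2 (1 - s2a) - f2 (1 - s2b) - pa * (s2b - s2a)) := by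
  rw [switchingLoss_eq_ownerUtility_sub, switchingLoss_eq_ownerUtility_sub, sub_lt_sub_iff,
    add_comm (ownerUtility f2 pb s2b)]
  have hopt1 {s : ℝ} (hs : 1 - s ∈ D) : ownerUtility f1 pa s ≤ ownerUtility f1 pa s1a :=
    ownerUtility_le_of_hasDerivWithinAt hf1.concaveOn h1a hs hd1a
  have hopt2 {s : ℝ} (hs : 1 - s ∈ D) : ownerUtility f2 pb s ≤ ownerUtility f2 pb s2b :=
    ownerUtility_le_of_hasDerivWithinAt hf2 h2b hs hd2b
  rcases lt_trichotomy s1b s2a with hlt | rfl | hgt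
  · exact (ownerUtility_add_lt_exchange_prices hab hlt).trans_le
      (add_le_add (hopt1 h1b) (hopt2 h2a))
  · calc
      ownerUtility f1 pb s1b + ownerUtility f2 pa s1b
          = ownerUtility f1 pa s1b + ownerUtility f2 pb s1b := by unfold ownerUtility; ring
      _ < ownerUtility f1 pa s1a + ownerUtility f2 pb s2b :=
        add_lt_add_of_lt_of_le (ownerUtility_lt_of_hasDerivWithinAt hf1 h1a h1b hne hd1a)
          (hopt2 h1b)
  · exact (ownerUtility_add_lt_exchange_owners hmono h1b h2a hgt).trans_le
      (add_le_add (hopt1 h2a) (hopt2 h1b))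

/-- the minimum sign-up bonus needed to attract owner 2 (lower
marginal self-usage utility) strictly exceeds the one needed for owner 1. -/
theorem signup_bonus_owner2_harder
    (f1 f1' f2 f2' : ℝ → ℝ) (hf1 : SelfUsage f1 f1') (hf2 : SelfUsage f2 f2')
    (horder : ∀ x ∈ Set.Ico (0:ℝ) 1, f2' x < f1' x)
    (pa pb : ℝ) (hpa : 0 ≤ pa) (hab : pa < pb) (hbf : pb < min (f1' 0) (f2' 0))
    (s1a s1b s2a s2b : ℝ)
    (h1a : s1a ∈ Set.Ico (0:ℝ) 1) (h1b : s1b ∈ Set.Ico (0:ℝ) 1)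
    (h2a : s2a ∈ Set.Ico (0:ℝ) 1) (h2b : s2b ∈ Set.Ico (0:ℝ) 1)
    (hd1a : f1' (1 - s1a) = pa) (hd1b : f1' (1 - s1b) = pb)
    (hd2a : f2' (1 - s2a) = pa) (hd2b : f2' (1 - s2b) = pb) :
    (pb - pa) * s1b - (f1 (1 - s1a) - f1 (1 - s1b) - pa * (s1b - s1a))
      < (pb - pa) * s2b - (f2 (1 - s2a) - f2 (1 - s2b) - pa * (s2b - s2a)) := by
  have mem_kept {s : ℝ} (hs : s ∈ Set.Ico (0:ℝ) 1) : 1 - s ∈ Set.Icc (0:ℝ) 1 :=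
    Set.Icc.one_sub_mem (Set.Ico_subset_Icc_self hs)
  exact signup_bonus_owner2_harder_general hf1.2.2.1 hf2.2.2.1.concaveOn
    (strictMonoOn_sub_of_hasDerivWithinAt_lt (convex_Icc 0 1) hf1.1 hf2.1 fun x hx ↦
      horder x (Set.Ioo_subset_Ico_self (interior_Icc.subset hx)))
    hab (mem_kept h1a) (mem_kept h1b) (mem_kept h2a) (mem_kept h2b)
    (by rintro rfl; exact hab.ne (hd1a.symm.trans hd1b))
    (hd1a ▸ hf1.1 _ (mem_kept h1a)) (hd2b ▸ hf2.1 _ (mem_kept h2b))
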